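/- Let A be a normed ring and let a, s, p ∈ A satisfy (a·s − s·a)·p = 0 and p·(a·s − s·a) = 0. Then a·s² − s²·a = (a·s − s·a)·(s − p) + (s − p)·(a·s − s·a), and consequently ‖a·s² − s²·a‖ ≤ 2·‖a·s − s·a‖·‖s − p‖. -/

import Mathlib

/-- The algebraic splitting at the heart of Lemma "Trick1" of the paper: in a normed ring,
if `(a·s − s·a)·p = 0` and `p·(a·s − s·a) = 0`, then
`a·s² − s²·a = (a·s − s·a)·(s − p) + (s − p)·(a·s − s·a)`, and consequently
`‖a·s² − s²·a‖ ≤ 2·‖a·s − s·a‖·‖s − p‖`. -/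
theorem commutator_square_splitting {A : Type*} [NormedRing A] (a s p : A)
    (h₁ : (a * s - s * a) * p = 0) (h₂ : p * (a * s - s * a) = 0) :
    a * s ^ 2 - s ^ 2 * a =
      (a * s - s * a) * (s - p) + (s - p) * (a * s - s * a) ∧
    ‖a * s ^ 2 - s ^ 2 * a‖ ≤ 2 * ‖a * s - s * a‖ * ‖s - p‖ := by
  have key : a * s ^ 2 - s ^ 2 * a =
      (a * s - s * a) * (s - p) + (s - p) * (a * s - s * a) := by
    rw [mul_sub (a * s - s * a) s p, sub_mul s p (a * s - s * a), h₁, h₂]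
    noncomm_ring
  refine ⟨key, ?_⟩
  rw [key]
  have e1 := norm_mul_le (a * s - s * a) (s - p)
  have e2 := norm_mul_le (s - p) (a * s - s * a)
  have e3 := norm_add_le ((a * s - s * a) * (s - p)) ((s - p) * (a * s - s * a))
  linarith [mul_comm ‖s - p‖ ‖a * s - s * a‖]
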